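/- Let s ≥ 1, Δt > 0, Δx ≠ 0, γ ≠ 0, let a_{ij}, b_i, c_i (1 ≤ i,j ≤ s) be real coefficients satisfying b_i a_{ij}/γ + b_j a_{ji}/γ − b_i b_j = 0 for all 1 ≤ i,j ≤ s. Let f : ℝ × ℝ^M → ℝ^M, t0 ∈ ℝ, and u0, u1, Y_1, …, Y_s ∈ ℝ^M satisfy u1 = u0 + Δt ∑_i b_i f(t0 + c_i Δt, Y_i) and Y_i = γ u0 + Δt ∑_j a_{ij} f(t0 + c_j Δt, Y_j). Let Ω ∈ ℝ^{M×M} be symmetric, w ∈ ℝ^M, set G(U) := ½ Uᵀ Ω U + ⟨w, U⟩, and suppose F, F′ : ℝ × ℝ^M → ℝ satisfy (F′(t,U) − F(t,U))/Δx = −(Uᵀ Ω + wᵀ) f(t,U) for all t ∈ ℝ and U ∈ ℝ^M. Then (G(γ u1) − G(γ u0))/Δt + (γ/Δx) ∑_{i=1}^s b_i (F′(t0 + c_i Δt, Y_i) − F(t0 + c_i Δt, Y_i)) = 0. -/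

import Mathlib

/-!
Write `k i` for the stage slopes, `K = ∑ b i • k i`, and `Q x y = xᵀ Ω y`. Since `Q` is symmetric,
`(G(γ u1) - G(γ u0)) / Δt = γ² Q u0 K + ½ γ² Δt Q K K + γ w·K`, while inserting the stage equations
in the conservation law turns the flux term into
`-γ (γ Q u0 K + Δt ∑ i, ∑ j, b i a i j Q (k j) (k i) + w·K)`.
The two cancel because symmetrizing the double sum in `i, j` and using the symplecticity
condition gives `γ Q K K = 2 ∑ i, ∑ j, b i a i j Q (k j) (k i)` (`symplectic_double_sum`).
-/

open Matrix Finset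

/-- Quadratic (possibly non-homogeneous) density `G(U) = ½ Uᵀ Ω U + ⟨w, U⟩`. -/
noncomputable def quadDensity {M : ℕ} (Ω : Matrix (Fin M) (Fin M) ℝ) (w : Fin M → ℝ)
    (U : Fin M → ℝ) : ℝ :=
  (1 / 2) * (U ⬝ᵥ (Ω *ᵥ U)) + w ⬝ᵥ U

/-- Symplecticity in the only form used: against a symmetric kernel `q`, the weights `γ b i b j`
may be replaced by `2 b i a i j`. -/
lemma symplectic_double_sum {s : ℕ} {γ : ℝ} (hγ : γ ≠ 0) (b : Fin s → ℝ) (a : Fin s → Fin s → ℝ)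
    (hsympl : ∀ i j, b i * a i j / γ + b j * a j i / γ - b i * b j = 0)
    (q : Fin s → Fin s → ℝ) (hq : ∀ i j, q i j = q j i) :
    γ * ∑ i, ∑ j, b i * b j * q i j = 2 * ∑ i, ∑ j, b i * a i j * q i j := by
  have hswap : ∑ i, ∑ j, b i * a i j * q i j = ∑ i, ∑ j, b j * a j i * q i j := by
    rw [Finset.sum_comm]
    exact Finset.sum_congr rfl fun i _ => Finset.sum_congr rfl fun j _ => by rw [hq]
  rw [two_mul]
  nth_rewrite 2 [hswap]
  simp only [Finset.mul_sum, ← Finset.sum_add_distrib]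
  refine Finset.sum_congr rfl fun i _ => Finset.sum_congr rfl fun j _ => ?_
  have h := hsympl i j
  field_simp at h
  linear_combination (-q i j) * h

/-- Theorem 3 ('if' direction): a symplectic EFRK step with all `γ_i = γ` preserves
semidiscrete conservation laws with quadratic density `G(U) = ½ Uᵀ Ω U + ⟨w, U⟩`. -/
theorem symplectic_efrk_equal_gamma_preserves_quadratic_density {M : ℕ} (s : ℕ) (hs : 1 ≤ s)
    (Δt Δx γ : ℝ) (hΔt : 0 < Δt) (hΔx : Δx ≠ 0) (hγ : γ ≠ 0)
    (b c : Fin s → ℝ) (a : Fin s → Fin s → ℝ)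
    (hsympl : ∀ i j, b i * a i j / γ + b j * a j i / γ - b i * b j = 0)
    (f : ℝ → (Fin M → ℝ) → (Fin M → ℝ)) (t0 : ℝ)
    (u0 u1 : Fin M → ℝ) (Y : Fin s → Fin M → ℝ)
    (hsol : u1 = u0 + Δt • ∑ i, b i • f (t0 + c i * Δt) (Y i))
    (hstage : ∀ i, Y i = γ • u0 + Δt • ∑ j, a i j • f (t0 + c j * Δt) (Y j))
    (Ω : Matrix (Fin M) (Fin M) ℝ) (hΩ : Ω.IsSymm) (w : Fin M → ℝ)
    (F F' : ℝ → (Fin M → ℝ) → ℝ)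
    (hcl : ∀ (t : ℝ) (U : Fin M → ℝ),
      (F' t U - F t U) / Δx = -(U ⬝ᵥ (Ω *ᵥ f t U) + w ⬝ᵥ f t U)) :
    (quadDensity Ω w (γ • u1) - quadDensity Ω w (γ • u0)) / Δt
      + (γ / Δx) * ∑ i, b i *
          (F' (t0 + c i * Δt) (Y i) - F (t0 + c i * Δt) (Y i)) = 0 := by
  set k : Fin s → Fin M → ℝ := fun i => f (t0 + c i * Δt) (Y i) with hk
  have hsymm : ∀ x y : Fin M → ℝ, x ⬝ᵥ (Ω *ᵥ y) = y ⬝ᵥ (Ω *ᵥ x) := fun x y => by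
    rw [dotProduct_mulVec, ← mulVec_transpose, hΩ.eq, dotProduct_comm]
  set K : Fin M → ℝ := ∑ i, b i • k i with hK
  have hu0K : u0 ⬝ᵥ (Ω *ᵥ K) = ∑ i, b i * (u0 ⬝ᵥ (Ω *ᵥ k i)) := by
    simp [hK, mulVec_sum, mulVec_smul, dotProduct_sum]
  have hwK : w ⬝ᵥ K = ∑ i, b i * (w ⬝ᵥ k i) := by
    simp [hK, dotProduct_sum]
  have hKK : K ⬝ᵥ (Ω *ᵥ K) = ∑ i, ∑ j, b i * b j * (k j ⬝ᵥ (Ω *ᵥ k i)) := by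
    simp only [hK, mulVec_sum, mulVec_smul, dotProduct_sum, sum_dotProduct, smul_dotProduct,
      dotProduct_smul, smul_eq_mul, Finset.mul_sum, mul_assoc]
  have hdouble := symplectic_double_sum hγ b a hsympl
    (fun i j => k j ⬝ᵥ (Ω *ᵥ k i)) (fun i j => hsymm _ _)
  have hYk : ∀ i, Y i ⬝ᵥ (Ω *ᵥ k i)
      = γ * (u0 ⬝ᵥ (Ω *ᵥ k i)) + Δt * ∑ j, a i j * (k j ⬝ᵥ (Ω *ᵥ k i)) := fun i => by
    have hYi : Y i = γ • u0 + Δt • ∑ j, a i j • k j := hstage i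
    -- only the left factor is expanded: `k i` itself depends on `Y i`
    generalize k i = v
    rw [hYi]
    simp [add_dotProduct, sum_dotProduct]
  have hflux : (γ / Δx) * ∑ i, b i * (F' (t0 + c i * Δt) (Y i) - F (t0 + c i * Δt) (Y i))
      = -γ * (γ * (u0 ⬝ᵥ (Ω *ᵥ K)) + Δt * ∑ i, ∑ j, b i * a i j * (k j ⬝ᵥ (Ω *ᵥ k i))
        + w ⬝ᵥ K) := by
    rw [hu0K, hwK]
    simp only [Finset.mul_sum, ← Finset.sum_add_distrib]
    refine Finset.sum_congr rfl fun i _ => ?_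
    have h : (F' (t0 + c i * Δt) (Y i) - F (t0 + c i * Δt) (Y i)) / Δx
        = -(Y i ⬝ᵥ (Ω *ᵥ k i) + w ⬝ᵥ k i) := hcl _ _
    rw [hYk] at h
    have hsum : ∑ j, Δt * (b i * a i j * (k j ⬝ᵥ (Ω *ᵥ k i)))
        = b i * (Δt * ∑ j, a i j * (k j ⬝ᵥ (Ω *ᵥ k i))) := by
      simp only [Finset.mul_sum]
      exact Finset.sum_congr rfl fun j _ => by ring
    rw [hsum]
    linear_combination γ * b i * h
  have hG : (quadDensity Ω w (γ • u1) - quadDensity Ω w (γ • u0)) / Δt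
      = γ ^ 2 * (u0 ⬝ᵥ (Ω *ᵥ K)) + 1 / 2 * γ ^ 2 * Δt * (K ⬝ᵥ (Ω *ᵥ K)) + γ * (w ⬝ᵥ K) := by
    have hu1 : u1 = u0 + Δt • K := hsol
    rw [div_eq_iff hΔt.ne', hu1]
    simp only [quadDensity, mulVec_add, mulVec_smul, dotProduct_add, add_dotProduct,
      smul_dotProduct, dotProduct_smul, smul_eq_mul, smul_add]
    rw [hsymm K u0]
    ring
  rw [hG, hflux, hKK]
  linear_combination 1 / 2 * γ * Δt * hdouble
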